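/- Let v_1, …, v_d be distinct, pairwise adjacent vertices of Γ (a clique). Then the map ℤ^d → A_Γ given by (n_1, …, n_d) ↦ v_1^{n_1} v_2^{n_2} ⋯ v_d^{n_d} is an injective group homomorphism (the v_i pairwise commute in A_Γ), and it is an isometric embedding of ℤ^d with the ℓ¹ metric: the word length of v_1^{n_1} ⋯ v_d^{n_d} in A_Γ equals |n_1| + |n_2| + ⋯ + |n_d|. Thus mutually commuting generators generate an undistorted copy of ℤ^d. -/

import Mathlib

/-- The commutator relators of the right-angled Artin group on the graph `Γ`. -/
def raagRels {V : Type*} (Γ : SimpleGraph V) : Set (FreeGroup V) :=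
  {r | ∃ u v : V, Γ.Adj u v ∧
    r = FreeGroup.of u * FreeGroup.of v * (FreeGroup.of u)⁻¹ * (FreeGroup.of v)⁻¹}

/-- The right-angled Artin group `A_Γ` on the graph `Γ`. -/
abbrev RAAG {V : Type*} (Γ : SimpleGraph V) : Type _ :=
  PresentedGroup (raagRels Γ)

/-- The generator of `A_Γ` corresponding to the vertex `v`. -/
def RAAG.gen {V : Type*} (Γ : SimpleGraph V) (v : V) : RAAG Γ :=
  PresentedGroup.of v

/-- Word length of `g` with respect to a generating set `X`: the least `n` such that
`g` is a product of `n` elements of `X ∪ X⁻¹`. -/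
noncomputable def wlen {G : Type*} [Group G] (X : Set G) (g : G) : ℕ :=
  sInf {n | ∃ l : List G, l.length = n ∧ (∀ x ∈ l, x ∈ X ∨ x⁻¹ ∈ X) ∧ l.prod = g}

/-- Word length in `A_Γ` with respect to the vertex generating set. -/
noncomputable def RAAG.wordLength {V : Type*} (Γ : SimpleGraph V) (g : RAAG Γ) : ℕ :=
  wlen (Set.range (RAAG.gen Γ)) g

/-- The letter `v^e` (with `e = true` for `v` and `e = false` for `v⁻¹`). -/
def RAAG.letter {V : Type*} (Γ : SimpleGraph V) (v : V) (e : Bool) : RAAG Γ :=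
  if e then RAAG.gen Γ v else (RAAG.gen Γ v)⁻¹

/-!
Send each vertex `v` of `Γ` to its basis vector in the free abelian group `ℤ^(V)`. The relators are
commutators, so this extends to a homomorphism on `A_Γ`, and each letter of a word changes the `ℓ¹`
norm of the image by at most one. Hence word length dominates the `ℓ¹` norm of the exponent vector.
The exponent vector of `v₁^{n₁} ⋯ v_d^{n_d}` is `(n₁, …, n_d)` placed on the distinct vertices `vᵢ`,
which gives injectivity and the lower bound on the length; the obvious word attains that bound.
-/

theorem prod_ofFn_mul_of_commute {M : Type*} [Monoid M] {d : ℕ} {f g : Fin d → M}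
    (hcomm : ∀ i j, j < i → Commute (f i) (g j)) :
    (List.ofFn fun i => f i * g i).prod = (List.ofFn f).prod * (List.ofFn g).prod := by
  induction d with
  | zero => simp
  | succ d ih =>
    have htail : Commute (List.ofFn fun i : Fin d => f i.succ).prod (g 0) :=
      Commute.list_prod_left _ _ <| List.forall_mem_ofFn_iff.2 fun i => hcomm _ _ i.succ_pos
    simp only [List.ofFn_succ, List.prod_cons]
    rw [ih fun i j hji => hcomm _ _ (Fin.succ_lt_succ_iff.2 hji), htail.mul_mul_mul_comm]

section WordLength

variable {G : Type*} [Group G] {X : Set G}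

theorem wlen_prod_le_length {l : List G} (hl : ∀ x ∈ l, x ∈ X ∨ x⁻¹ ∈ X) :
    wlen X l.prod ≤ l.length :=
  Nat.sInf_le ⟨l, rfl, hl, rfl⟩

-- Outside `Subgroup.closure X`, `wlen` is the infimum of the empty set, with junk value `0`.
theorem exists_list_length_eq_wlen {g : G} (hg : g ∈ Subgroup.closure X) :
    ∃ l : List G, l.length = wlen X g ∧ (∀ x ∈ l, x ∈ X ∨ x⁻¹ ∈ X) ∧ l.prod = g := by
  rw [← Subgroup.mem_toSubmonoid, Subgroup.closure_toSubmonoid] at hg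
  obtain ⟨l, hl, hprod⟩ := Submonoid.exists_list_of_mem_closure hg
  have hwords : {n | ∃ l : List G, l.length = n ∧ (∀ x ∈ l, x ∈ X ∨ x⁻¹ ∈ X) ∧
      l.prod = g}.Nonempty := ⟨l.length, l, rfl, hl, hprod⟩
  exact Nat.sInf_mem hwords

theorem wlen_one : wlen X (1 : G) = 0 :=
  Nat.le_zero.1 <| wlen_prod_le_length (l := []) (by simp)

theorem wlen_mul_le {g h : G} (hg : g ∈ Subgroup.closure X) (hh : h ∈ Subgroup.closure X) :
    wlen X (g * h) ≤ wlen X g + wlen X h := by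
  obtain ⟨lg, hlg, hgX, rfl⟩ := exists_list_length_eq_wlen hg
  obtain ⟨lh, hlh, hhX, rfl⟩ := exists_list_length_eq_wlen hh
  rw [← hlg, ← hlh, ← List.prod_append, ← List.length_append]
  exact wlen_prod_le_length fun x hx => (List.mem_append.1 hx).elim (hgX x) (hhX x)

theorem wlen_zpow_le_natAbs {x : G} (hx : x ∈ X) (n : ℤ) : wlen X (x ^ n) ≤ n.natAbs := by
  have wlen_pow_le {y : G} (hy : y ∈ X ∨ y⁻¹ ∈ X) (k : ℕ) : wlen X (y ^ k) ≤ k := by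
    simpa using wlen_prod_le_length (l := List.replicate k y)
      fun z hz => List.eq_of_mem_replicate hz ▸ hy
  obtain ⟨k, rfl | rfl⟩ := n.eq_nat_or_neg
  · simpa using wlen_pow_le (.inl hx) k
  · simpa using wlen_pow_le (y := x⁻¹) (.inr (by simpa using hx)) k

theorem wlen_prod_zpow_le_sum_natAbs (hX : Subgroup.closure X = ⊤) {d : ℕ} {x : Fin d → G}
    (hx : ∀ i, x i ∈ X) (n : Fin d → ℤ) :
    wlen X (List.ofFn fun i => x i ^ n i).prod ≤ ∑ i, (n i).natAbs := by
  have mem_closure (g : G) : g ∈ Subgroup.closure X := hX ▸ Subgroup.mem_top g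
  calc wlen X (List.ofFn fun i => x i ^ n i).prod
      ≤ ((List.ofFn fun i => x i ^ n i).map (wlen X)).sum :=
        List.apply_prod_le_sum_map _ _ wlen_one.le
          fun g h => wlen_mul_le (mem_closure g) (mem_closure h)
    _ = ∑ i, wlen X (x i ^ n i) := by rw [List.map_ofFn, List.sum_ofFn]; rfl
    _ ≤ ∑ i, (n i).natAbs := Finset.sum_le_sum fun i _ => wlen_zpow_le_natAbs (hx i) (n i)

theorem le_wlen_of_subadditive {N : G → ℕ} (hN_one : N 1 = 0)
    (hN_mul : ∀ g h, N (g * h) ≤ N g + N h) (hN_letter : ∀ x, x ∈ X ∨ x⁻¹ ∈ X → N x ≤ 1)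
    {g : G} (hg : g ∈ Subgroup.closure X) : N g ≤ wlen X g := by
  obtain ⟨l, hlen, hl, rfl⟩ := exists_list_length_eq_wlen hg
  calc N l.prod ≤ (l.map N).sum := l.apply_prod_le_sum_map N hN_one.le hN_mul
    _ ≤ (l.map N).length • 1 :=
      List.sum_le_card_nsmul _ _ <| List.forall_mem_map.2 fun x hx => hN_letter x (hl x hx)
    _ = wlen X l.prod := by simp [hlen]

end WordLength

section L1Norm

variable {α β : Type*}

/-- The `ℓ¹` norm `∑ₐ |f a|` of a finitely supported integer vector, as a natural number so that it
can be compared with word length. -/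
def l1Norm (f : α →₀ ℤ) : ℕ :=
  f.sum fun _ n => n.natAbs

theorem l1Norm_zero : l1Norm (0 : α →₀ ℤ) = 0 :=
  Finsupp.sum_zero_index

theorem l1Norm_single (a : α) (n : ℤ) : l1Norm (Finsupp.single a n) = n.natAbs :=
  Finsupp.sum_single_index rfl

theorem l1Norm_neg (f : α →₀ ℤ) : l1Norm (-f) = l1Norm f := by
  simp [l1Norm, Finsupp.sum_neg_index]

theorem l1Norm_add_le (f g : α →₀ ℤ) : l1Norm (f + g) ≤ l1Norm f + l1Norm g := by
  classical
  have l1Norm_eq_sum {h : α →₀ ℤ} (hh : h.support ⊆ f.support ∪ g.support) :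
      l1Norm h = ∑ a ∈ f.support ∪ g.support, (h a).natAbs :=
    Finsupp.sum_of_support_subset _ hh _ fun _ _ => rfl
  rw [l1Norm_eq_sum Finsupp.support_add, l1Norm_eq_sum Finset.subset_union_left,
    l1Norm_eq_sum Finset.subset_union_right, ← Finset.sum_add_distrib]
  exact Finset.sum_le_sum fun a _ => Int.natAbs_add_le (f a) (g a)

theorem l1Norm_mapDomain {v : α → β} (hv : v.Injective) (f : α →₀ ℤ) :
    l1Norm (f.mapDomain v) = l1Norm f :=
  Finsupp.sum_mapDomain_index_inj hv

theorem l1Norm_equivFunOnFinite_symm [Fintype α] (n : α → ℤ) :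
    l1Norm (Finsupp.equivFunOnFinite.symm n) = ∑ a, (n a).natAbs :=
  Finsupp.sum_fintype _ _ fun _ => rfl

end L1Norm

namespace RAAG

variable {V : Type*} {Γ : SimpleGraph V}

theorem commute_gen_of_adj {u w : V} (huw : Γ.Adj u w) : Commute (gen Γ u) (gen Γ w) :=
  commutatorElement_eq_one_iff_commute.1 <| PresentedGroup.one_of_mem ⟨u, w, huw, rfl⟩

theorem closure_range_gen : Subgroup.closure (Set.range (gen Γ)) = ⊤ :=
  PresentedGroup.closure_range_of (raagRels Γ)

variable (Γ) in
/-- The abelianization map of `A_Γ`: the coordinate at `v` of the image of `g` is the exponent sum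
of `v` in any word representing `g`. The additive group `V →₀ ℤ` is wrapped in `Multiplicative` so
that the map is a `MonoidHom`. -/
noncomputable def exponentVector : RAAG Γ →* Multiplicative (V →₀ ℤ) :=
  PresentedGroup.toGroup (f := fun v => Multiplicative.ofAdd (Finsupp.single v 1)) <| by
    rintro _ ⟨u, w, -, rfl⟩
    simp

theorem exponentVector_gen (v : V) :
    exponentVector Γ (gen Γ v) = Multiplicative.ofAdd (Finsupp.single v 1) :=
  PresentedGroup.toGroup.of _

theorem exponentVector_prod_gen_zpow {d : ℕ} (v : Fin d → V) (n : Fin d → ℤ) :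
    (exponentVector Γ (List.ofFn fun i => gen Γ (v i) ^ n i).prod).toAdd =
      (Finsupp.equivFunOnFinite.symm n).mapDomain v := by
  rw [map_list_prod, List.map_ofFn, List.prod_ofFn, toAdd_prod, Finsupp.mapDomain,
    Finsupp.sum_fintype _ _ fun _ => Finsupp.single_zero _]
  simp [exponentVector_gen]

theorem l1Norm_exponentVector_le_wordLength (g : RAAG Γ) :
    l1Norm (exponentVector Γ g).toAdd ≤ wordLength Γ g := by
  refine le_wlen_of_subadditive (N := fun g => l1Norm (exponentVector Γ g).toAdd) ?_ ?_ ?_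
    (closure_range_gen ▸ Subgroup.mem_top g)
  · simp [l1Norm_zero]
  · intro g h
    simpa using l1Norm_add_le (exponentVector Γ g).toAdd (exponentVector Γ h).toAdd
  · rintro x (⟨v, rfl⟩ | ⟨v, hv⟩)
    · simp [exponentVector_gen, l1Norm_single]
    · simp [← inv_eq_iff_eq_inv.2 hv, exponentVector_gen, l1Norm_neg, l1Norm_single]

theorem prod_gen_zpow_injective {d : ℕ} {v : Fin d → V} (hv : v.Injective) :
    Function.Injective fun n : Fin d → ℤ => (List.ofFn fun i => gen Γ (v i) ^ n i).prod := by
  intro m n hmn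
  have hexp := congrArg (fun g => (exponentVector Γ g).toAdd) hmn
  simp only [exponentVector_prod_gen_zpow] at hexp
  exact Finsupp.equivFunOnFinite.symm.injective (Finsupp.mapDomain_injective hv hexp)

theorem wordLength_prod_gen_zpow {d : ℕ} {v : Fin d → V} (hv : v.Injective) (n : Fin d → ℤ) :
    wordLength Γ (List.ofFn fun i => gen Γ (v i) ^ n i).prod = ∑ i, (n i).natAbs := by
  refine le_antisymm
    (wlen_prod_zpow_le_sum_natAbs closure_range_gen (fun i => Set.mem_range_self (v i)) n) ?_
  calc ∑ i, (n i).natAbs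
      = l1Norm (exponentVector Γ (List.ofFn fun i => gen Γ (v i) ^ n i).prod).toAdd := by
        rw [exponentVector_prod_gen_zpow, l1Norm_mapDomain hv, l1Norm_equivFunOnFinite_symm]
    _ ≤ wordLength Γ (List.ofFn fun i => gen Γ (v i) ^ n i).prod :=
        l1Norm_exponentVector_le_wordLength _

end RAAG

theorem raag_clique_gives_undistorted_Zd_general {V : Type*} (Γ : SimpleGraph V)
    (d : ℕ) (v : Fin d → V) (hadj : ∀ i j : Fin d, i ≠ j → Γ.Adj (v i) (v j)) :
    (∀ i j : Fin d, i ≠ j → Commute (RAAG.gen Γ (v i)) (RAAG.gen Γ (v j))) ∧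
    (∀ m n : Fin d → ℤ,
      (List.ofFn fun i => RAAG.gen Γ (v i) ^ (m i + n i)).prod
        = (List.ofFn fun i => RAAG.gen Γ (v i) ^ m i).prod
          * (List.ofFn fun i => RAAG.gen Γ (v i) ^ n i).prod) ∧
    Function.Injective
      (fun n : Fin d → ℤ => (List.ofFn fun i => RAAG.gen Γ (v i) ^ n i).prod) ∧
    (∀ n : Fin d → ℤ,
      RAAG.wordLength Γ (List.ofFn fun i => RAAG.gen Γ (v i) ^ n i).prod
        = ∑ i, (n i).natAbs) := by
  have hinj : Function.Injective v := fun i j hij =>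
    by_contra fun hne => (hadj i j hne).ne hij
  have hcomm : ∀ i j : Fin d, i ≠ j → Commute (RAAG.gen Γ (v i)) (RAAG.gen Γ (v j)) :=
    fun i j hij => RAAG.commute_gen_of_adj (hadj i j hij)
  refine ⟨hcomm, fun m n => ?_, RAAG.prod_gen_zpow_injective hinj,
    RAAG.wordLength_prod_gen_zpow hinj⟩
  simp only [zpow_add]
  exact prod_ofFn_mul_of_commute fun i j hji => (hcomm i j hji.ne').zpow_zpow _ _

theorem raag_clique_gives_undistorted_Zd {V : Type*} [Fintype V] (Γ : SimpleGraph V)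
    (d : ℕ) (v : Fin d → V) (hinj : Function.Injective v)
    (hadj : ∀ i j : Fin d, i ≠ j → Γ.Adj (v i) (v j)) :
    (∀ i j : Fin d, i ≠ j → Commute (RAAG.gen Γ (v i)) (RAAG.gen Γ (v j))) ∧
    (∀ m n : Fin d → ℤ,
      (List.ofFn fun i => RAAG.gen Γ (v i) ^ (m i + n i)).prod
        = (List.ofFn fun i => RAAG.gen Γ (v i) ^ m i).prod
          * (List.ofFn fun i => RAAG.gen Γ (v i) ^ n i).prod) ∧
    Function.Injective
      (fun n : Fin d → ℤ => (List.ofFn fun i => RAAG.gen Γ (v i) ^ n i).prod) ∧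
    (∀ n : Fin d → ℤ,
      RAAG.wordLength Γ (List.ofFn fun i => RAAG.gen Γ (v i) ^ n i).prod
        = ∑ i, (n i).natAbs) :=
  raag_clique_gives_undistorted_Zd_general Γ d v hadj
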